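/- Let p > 1, let x ∈ ℝ² be fixed, let μ ∈ 𝒲_p(ℝ²) and set T = d_{W_p}(δ_x, μ). Then the following are equivalent: (a) there exists a unique unit-speed geodesic segment γ : [0,T] → 𝒲_p(ℝ²) with γ(0) = δ_x and γ(T) = μ; (b) supp(μ) ⊆ D_x, where D_x = (x + L₊) ∪ (x + L₋) is the union of the two diagonal lines through x. -/

import Mathlib

open MeasureTheory

/-- The `p`-Wasserstein distance between two measures, defined as the infimum over all
couplings `π` of `μ` and `ν` of `(∬ d(x,y)^p dπ)^(1/p)`. -/
noncomputable def Wdist {X : Type*} [MeasurableSpace X] [PseudoMetricSpace X] (p : ℝ)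
    (μ ν : Measure X) : ℝ :=
  (⨅ π ∈ {π : Measure (X × X) | π.map Prod.fst = μ ∧ π.map Prod.snd = ν},
    (∫⁻ q, edist q.1 q.2 ^ p ∂π) ^ (1 / p)).toReal

/-- The `p`-Wasserstein space over `X`: Borel probability measures on `X` with finite
`p`-th moment. -/
def WSet (X : Type*) [MeasurableSpace X] [PseudoMetricSpace X] (p : ℝ) : Set (Measure X) :=
  {μ | IsProbabilityMeasure μ ∧ ∃ x₀ : X, ∫⁻ x, edist x x₀ ^ p ∂μ < ⊤}

/-- An isometry of the underlying metric space: a distance-preserving bijection. -/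
def IsIsom {X : Type*} [PseudoMetricSpace X] (T : X → X) : Prop :=
  Function.Bijective T ∧ ∀ x y, dist (T x) (T y) = dist x y

/-- An isometry of the `p`-Wasserstein space over `X`: a bijection of the space of
probability measures with finite `p`-th moment preserving the Wasserstein distance. -/
def IsWIsometry (X : Type*) [MeasurableSpace X] [PseudoMetricSpace X] (p : ℝ)
    (Φ : Measure X → Measure X) : Prop :=
  Set.BijOn Φ (WSet X p) (WSet X p) ∧
    ∀ μ ∈ WSet X p, ∀ ν ∈ WSet X p, Wdist p (Φ μ) (Φ ν) = Wdist p μ ν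

/-- The (topological) support of a measure. -/
def msupport {X : Type*} [TopologicalSpace X] [MeasurableSpace X] (μ : Measure X) : Set X :=
  {x | ∀ U : Set X, IsOpen U → x ∈ U → μ U ≠ 0}

def diagLine (ε a : ℝ) : Set (ℝ × ℝ) := {z | z.2 = ε * z.1 + a}

def Lplus : Set (ℝ × ℝ) := {z | z.2 = z.1}

def Lminus : Set (ℝ × ℝ) := {z | z.2 = -z.1}

/-- The closed square `Q = [-1,1]²`. -/
abbrev Qs : Set (ℝ × ℝ) := Set.Icc (-1, -1) (1, 1)

def LplusQ : Set ↥Qs := {q | (q : ℝ × ℝ).2 = (q : ℝ × ℝ).1}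

def LminusQ : Set ↥Qs := {q | (q : ℝ × ℝ).2 = -(q : ℝ × ℝ).1}


/-- A unit-speed geodesic segment of length `T` in the `p`-Wasserstein space over `ℝ²`. -/
def IsWGeo (p T : ℝ) (γ : ℝ → Measure (ℝ × ℝ)) : Prop :=
  (∀ t ∈ Set.Icc (0 : ℝ) T, γ t ∈ WSet (ℝ × ℝ) p) ∧
    ∀ s ∈ Set.Icc (0 : ℝ) T, ∀ t ∈ Set.Icc (0 : ℝ) T, Wdist p (γ s) (γ t) = |s - t|


theorem Wdist_dirac_aux (p : ℝ) (x : ℝ × ℝ) (μ : Measure (ℝ × ℝ)) [IsProbabilityMeasure μ] :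
    Wdist p (Measure.dirac x) μ = ((∫⁻ z, edist x z ^ p ∂μ) ^ (1 / p)).toReal := by
  unfold Wdist
  congr 1
  have key : ∀ π ∈ {π : Measure ((ℝ × ℝ) × (ℝ × ℝ)) | π.map Prod.fst = Measure.dirac x ∧ π.map Prod.snd = μ},
      (∫⁻ q, edist q.1 q.2 ^ p ∂π) = ∫⁻ z, edist x z ^ p ∂μ := by
    rintro π ⟨h1, h2⟩
    have hx : ∀ᵐ q ∂π, q.1 = x := by
      have : ∀ᵐ y ∂(π.map Prod.fst), y = x := by
        rw [h1, ae_dirac_eq]; rfl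
      exact ae_of_ae_map measurable_fst.aemeasurable this
    rw [← h2, lintegral_map (by fun_prop) measurable_snd]
    apply lintegral_congr_ae
    filter_upwards [hx] with q hq
    rw [hq]
  apply le_antisymm
  · have hm : Measurable (fun z : ℝ × ℝ => (x, z)) := by fun_prop
    have hmem : μ.map (fun z => (x, z)) ∈ {π : Measure ((ℝ × ℝ) × (ℝ × ℝ)) | π.map Prod.fst = Measure.dirac x ∧ π.map Prod.snd = μ} := by
      constructor
      · rw [Measure.map_map measurable_fst hm]
        simp [Function.comp_def, Measure.map_const]
      · rw [Measure.map_map measurable_snd hm]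
        simp [Function.comp_def]
    refine (iInf₂_le _ hmem).trans ?_
    rw [key _ hmem]
  · refine le_iInf₂ fun π hπ => ?_
    rw [key _ hπ]

theorem moment_aux {p : ℝ} (hp : 1 < p) (x : ℝ × ℝ) {μ : Measure (ℝ × ℝ)} (hμ : μ ∈ WSet (ℝ × ℝ) p) :
    ∫⁻ z, edist x z ^ p ∂μ < ⊤ := by
  obtain ⟨hP, x₀, h⟩ := hμ
  calc ∫⁻ z, edist x z ^ p ∂μ ≤ ∫⁻ z, 2 ^ (p - 1) * (edist x x₀ ^ p + edist z x₀ ^ p) ∂μ := by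
        apply lintegral_mono
        intro z
        refine le_trans ?_ (ENNReal.rpow_add_le_mul_rpow_add_rpow _ _ hp.le)
        apply ENNReal.rpow_le_rpow _ (by linarith)
        rw [edist_comm z x₀]
        exact edist_triangle _ _ _
    _ < ⊤ := by
        rw [lintegral_const_mul _ (by fun_prop), lintegral_add_left (by fun_prop)]
        simp only [lintegral_const, measure_univ, mul_one]
        apply ENNReal.mul_lt_top
        · exact ENNReal.rpow_lt_top_of_nonneg (by linarith) (by simp)
        · exact ENNReal.add_lt_top.2 ⟨ENNReal.rpow_lt_top_of_nonneg (by linarith) (edist_ne_top _ _), h⟩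

theorem Wdist_dirac_pow {p : ℝ} (hp : 1 < p) (x : ℝ × ℝ) {μ : Measure (ℝ × ℝ)} (hμ : μ ∈ WSet (ℝ × ℝ) p) :
    ENNReal.ofReal (Wdist p (Measure.dirac x) μ) = (∫⁻ z, edist x z ^ p ∂μ) ^ (1 / p) := by
  have := hμ.1
  rw [Wdist_dirac_aux, ENNReal.ofReal_toReal]
  exact (ENNReal.rpow_lt_top_of_nonneg (by positivity) (moment_aux hp x hμ).ne).ne

theorem Wdist_dirac_pow' {p : ℝ} (hp : 1 < p) (x : ℝ × ℝ) {μ : Measure (ℝ × ℝ)} (hμ : μ ∈ WSet (ℝ × ℝ) p) :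
    ENNReal.ofReal (Wdist p (Measure.dirac x) μ) ^ p = (∫⁻ z, edist x z ^ p ∂μ) := by
  rw [Wdist_dirac_pow hp x hμ, ← ENNReal.rpow_mul, one_div, inv_mul_cancel₀ (by linarith), ENNReal.rpow_one]

theorem Wdist_lower {p : ℝ} (hp : 1 < p) (x : ℝ × ℝ) {μ ν : Measure (ℝ × ℝ)} (hμ : μ ∈ WSet (ℝ × ℝ) p)
    (hν : ν ∈ WSet (ℝ × ℝ) p) (π : Measure ((ℝ × ℝ) × (ℝ × ℝ))) (h1 : π.map Prod.fst = μ)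
    (h2 : π.map Prod.snd = ν) :
    ENNReal.ofReal |Wdist p (Measure.dirac x) μ - Wdist p (Measure.dirac x) ν| ≤
      (∫⁻ q, edist q.1 q.2 ^ p ∂π) ^ (1 / p) := by
  have e1 : (∫⁻ q, edist x q.1 ^ p ∂π) ^ (1 / p) = ENNReal.ofReal (Wdist p (Measure.dirac x) μ) := by
    rw [Wdist_dirac_pow hp x hμ, ← h1, lintegral_map (by fun_prop) measurable_fst]
  have e2 : (∫⁻ q, edist x q.2 ^ p ∂π) ^ (1 / p) = ENNReal.ofReal (Wdist p (Measure.dirac x) ν) := by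
    rw [Wdist_dirac_pow hp x hν, ← h2, lintegral_map (by fun_prop) measurable_snd]
  have hmin : ∀ f g h : (ℝ × ℝ) × (ℝ × ℝ) → ENNReal, Measurable f → Measurable g →
      (∀ q, h q ≤ f q + g q) → (∫⁻ q, h q ^ p ∂π) ^ (1 / p) ≤ (∫⁻ q, f q ^ p ∂π) ^ (1 / p) +
        (∫⁻ q, g q ^ p ∂π) ^ (1 / p) := by
    intro f g h hf hg hh
    refine le_trans ?_ (ENNReal.lintegral_Lp_add_le hf.aemeasurable hg.aemeasurable hp.le)
    apply ENNReal.rpow_le_rpow _ (by positivity)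
    apply lintegral_mono
    intro q
    exact ENNReal.rpow_le_rpow (hh q) (by linarith)
  have m1 := hmin (fun q => edist x q.1) (fun q => edist q.1 q.2) (fun q => edist x q.2)
    (by fun_prop) (by fun_prop) (fun q => edist_triangle _ _ _)
  have m2 := hmin (fun q => edist x q.2) (fun q => edist q.1 q.2) (fun q => edist x q.1)
    (by fun_prop) (by fun_prop) (fun q => by rw [edist_comm q.1 q.2]; exact edist_triangle _ _ _)
  simp only [e1, e2] at m1 m2
  have n1 : 0 ≤ Wdist p (Measure.dirac x) μ := ENNReal.toReal_nonneg
  have n2 : 0 ≤ Wdist p (Measure.dirac x) ν := ENNReal.toReal_nonneg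
  rcases le_total (Wdist p (Measure.dirac x) μ) (Wdist p (Measure.dirac x) ν) with h | h
  · rw [abs_of_nonpos (by linarith), neg_sub, ENNReal.ofReal_sub _ n1]
    exact tsub_le_iff_left.2 m1
  · rw [abs_of_nonneg (by linarith), ENNReal.ofReal_sub _ n2]
    exact tsub_le_iff_left.2 m2

theorem geo_criterion {p : ℝ} (hp : 1 < p) (x : ℝ × ℝ) {μ : Measure (ℝ × ℝ)} (hμ : μ ∈ WSet (ℝ × ℝ) p)
    (hT : 0 < Wdist p (Measure.dirac x) μ) (E : ℝ → ℝ × ℝ → ℝ × ℝ) (hm : ∀ τ, Measurable (E τ))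
    (h0 : ∀ τ ∈ Set.Icc (0 : ℝ) 1, ∀ z, dist x (E τ z) = τ * dist x z)
    (hL : ∀ σ ∈ Set.Icc (0 : ℝ) 1, ∀ τ ∈ Set.Icc (0 : ℝ) 1, ∀ z, dist (E σ z) (E τ z) ≤ |σ - τ| * dist x z)
    (h1 : ∀ z, E 1 z = z) :
    IsWGeo p (Wdist p (Measure.dirac x) μ) (fun t => μ.map (E (t / Wdist p (Measure.dirac x) μ))) ∧
    μ.map (E (0 / Wdist p (Measure.dirac x) μ)) = Measure.dirac x ∧
    μ.map (E (Wdist p (Measure.dirac x) μ / Wdist p (Measure.dirac x) μ)) = μ := by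
  have hP := hμ.1
  have hmom := moment_aux hp x hμ
  have hpow := Wdist_dirac_pow hp x hμ
  set T := Wdist p (Measure.dirac x) μ with hTdef
  have hunit : ∀ t ∈ Set.Icc (0 : ℝ) T, t / T ∈ Set.Icc (0 : ℝ) 1 := fun t ht =>
    ⟨div_nonneg ht.1 hT.le, (div_le_one hT).2 ht.2⟩
  have hscale : ∀ c : ℝ, 0 ≤ c → (∫⁻ z, (ENNReal.ofReal c * edist x z) ^ p ∂μ) ^ (1 / p) =
      ENNReal.ofReal (c * T) := by
    intro c hc
    simp_rw [ENNReal.mul_rpow_of_nonneg _ _ (by linarith : 0 ≤ p)]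
    rw [lintegral_const_mul _ (by fun_prop), ENNReal.mul_rpow_of_nonneg _ _ (by positivity), ← hpow,
      ← ENNReal.rpow_mul, mul_one_div_cancel (by linarith), ENNReal.rpow_one, ENNReal.ofReal_mul hc]
  have hed : ∀ t ∈ Set.Icc (0 : ℝ) T, ∀ z, edist x (E (t / T) z) = ENNReal.ofReal (t / T) * edist x z := by
    intro t ht z
    rw [edist_dist, h0 _ (hunit t ht), ENNReal.ofReal_mul (hunit t ht).1, ← edist_dist]
  have hint : ∀ t ∈ Set.Icc (0 : ℝ) T, (∫⁻ z, edist x z ^ p ∂(μ.map (E (t / T)))) ^ (1 / p) = ENNReal.ofReal t := by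
    intro t ht
    rw [lintegral_map (by fun_prop) (hm _)]
    simp_rw [hed t ht]
    rw [hscale _ (hunit t ht).1, div_mul_cancel₀ _ hT.ne']
  have hW : ∀ t ∈ Set.Icc (0 : ℝ) T, μ.map (E (t / T)) ∈ WSet (ℝ × ℝ) p := by
    intro t ht
    refine ⟨Measure.isProbabilityMeasure_map (hm _).aemeasurable, x, ?_⟩
    simp_rw [edist_comm _ x]
    have := hint t ht
    by_contra hcon
    rw [not_lt, top_le_iff] at hcon
    rw [hcon, ENNReal.top_rpow_of_pos (by positivity)] at this
    exact ENNReal.ofReal_ne_top this.symm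
  have hWd : ∀ t ∈ Set.Icc (0 : ℝ) T, Wdist p (Measure.dirac x) (μ.map (E (t / T))) = t := by
    intro t ht
    have := (hW t ht).1
    rw [Wdist_dirac_aux, hint t ht, ENNReal.toReal_ofReal ht.1]
  refine ⟨⟨hW, ?_⟩, ?_, ?_⟩
  · intro s hs t ht
    show (_ : ENNReal).toReal = _
    rw [← ENNReal.toReal_ofReal (abs_nonneg (s - t))]
    congr 1
    apply le_antisymm
    · have hmm : Measurable (fun z => (E (s / T) z, E (t / T) z)) := (hm _).prodMk (hm _)
      refine (iInf₂_le (μ.map (fun z => (E (s / T) z, E (t / T) z))) ?_).trans ?_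
      · constructor
        · rw [Measure.map_map measurable_fst hmm]; rfl
        · rw [Measure.map_map measurable_snd hmm]; rfl
      · rw [lintegral_map (by fun_prop) hmm]
        have : |s - t| = |s / T - t / T| * T := by
          rw [← sub_div, abs_div, abs_of_pos hT, div_mul_cancel₀ _ hT.ne']
        rw [this, ← hscale _ (abs_nonneg _)]
        apply ENNReal.rpow_le_rpow _ (by positivity)
        apply lintegral_mono
        intro z
        apply ENNReal.rpow_le_rpow _ (by linarith)
        rw [edist_dist, edist_dist, ← ENNReal.ofReal_mul (abs_nonneg _)]
        exact ENNReal.ofReal_le_ofReal (hL _ (hunit s hs) _ (hunit t ht) z)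
    · refine le_iInf₂ fun π hπ => ?_
      have := Wdist_lower hp x (hW s hs) (hW t ht) π hπ.1 hπ.2
      rwa [hWd s hs, hWd t ht] at this
  · have : E (0 / T) = fun _ => x := by
      ext1 z
      have := h0 0 (by simp) z
      rw [zero_mul] at this
      rw [zero_div]
      exact (dist_eq_zero.1 this).symm
    rw [this, Measure.map_const, measure_univ, one_smul]
  · rw [div_self hT.ne']
    have : E 1 = id := by ext1 z; exact h1 z
    rw [this, Measure.map_id]

theorem msupport_subset_iff_aux (μ : Measure (ℝ × ℝ)) (D : Set (ℝ × ℝ)) (hD : IsClosed D) :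
    msupport μ ⊆ D ↔ μ Dᶜ = 0 := by
  constructor
  · intro h
    apply measure_null_of_locally_null
    intro z hz
    have : z ∉ msupport μ := fun hh => hz (h hh)
    simp only [msupport, Set.mem_ofPred_eq, not_forall, not_not] at this
    obtain ⟨U, hU, hzU, h0⟩ := this
    exact ⟨U, mem_nhdsWithin_of_mem_nhds (hU.mem_nhds hzU), h0⟩
  · intro h z hz
    by_contra hzD
    exact hz Dᶜ hD.isOpen_compl hzD h

/-- straight-line interpolation -/
noncomputable def linE (x : ℝ × ℝ) (τ : ℝ) (z : ℝ × ℝ) : ℝ × ℝ :=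
  (x.1 + τ * (z.1 - x.1), x.2 + τ * (z.2 - x.2))

/-- bent interpolation -/
noncomputable def bentE (x : ℝ × ℝ) (τ : ℝ) (z : ℝ × ℝ) : ℝ × ℝ :=
  (x.1 + min (τ * dist x z) (z.1 - x.1 + (1 - τ) * dist x z),
   x.2 + min (τ * dist x z) (z.2 - x.2 + (1 - τ) * dist x z))

theorem dist_cases (x z : ℝ × ℝ) : |z.1 - x.1| ≤ dist x z ∧ |z.2 - x.2| ≤ dist x z ∧
    (|z.1 - x.1| = dist x z ∨ |z.2 - x.2| = dist x z) := by
  rw [Prod.dist_eq, Real.dist_eq, Real.dist_eq, abs_sub_comm x.1, abs_sub_comm x.2]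
  refine ⟨le_max_left _ _, le_max_right _ _, ?_⟩
  rcases max_choice (|z.1 - x.1|) (|z.2 - x.2|) with h | h
  · exact Or.inl h.symm
  · exact Or.inr h.symm

theorem min_coord {a r σ τ : ℝ} (hr : 0 ≤ r) :
    |min (σ * r) (a + (1 - σ) * r) - min (τ * r) (a + (1 - τ) * r)| ≤ |σ - τ| * r := by
  refine (abs_min_sub_min_le_max _ _ _ _).trans ?_
  apply max_le
  · rw [← sub_mul, abs_mul, abs_of_nonneg hr]
  · have : a + (1 - σ) * r - (a + (1 - τ) * r) = -((σ - τ) * r) := by ring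
    rw [this, abs_neg, abs_mul, abs_of_nonneg hr]

theorem min_coord_le {a r τ : ℝ} (ha : |a| ≤ r) (hτ : τ ∈ Set.Icc (0 : ℝ) 1) :
    |min (τ * r) (a + (1 - τ) * r)| ≤ τ * r := by
  have hr : 0 ≤ r := (abs_nonneg a).trans ha
  have h := abs_le.1 ha
  have h2 := mul_nonneg hτ.1 hr
  rw [abs_le]
  refine ⟨le_min (by linarith) (by linarith [h.1]), min_le_left _ _⟩

theorem min_coord_eq {a r τ : ℝ} (ha : |a| = r) (hτ : τ ∈ Set.Icc (0 : ℝ) 1) :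
    |min (τ * r) (a + (1 - τ) * r)| = τ * r := by
  have hr : 0 ≤ r := (abs_nonneg a).trans ha.le
  have h2 := mul_nonneg hτ.1 hr
  have h3 := mul_nonneg (sub_nonneg.2 hτ.2) hr
  rcases abs_choice a with h | h
  · rw [min_eq_left (by nlinarith), abs_of_nonneg h2]
  · rw [min_eq_right (by nlinarith)]
    have : a + (1 - τ) * r = - (τ * r) := by nlinarith
    rw [this, abs_neg, abs_of_nonneg h2]

theorem lin_le_min {a r τ : ℝ} (ha : |a| ≤ r) (hτ : τ ∈ Set.Icc (0 : ℝ) 1) :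
    τ * a ≤ min (τ * r) (a + (1 - τ) * r) := by
  have h := abs_le.1 ha
  apply le_min
  · exact mul_le_mul_of_nonneg_left h.2 hτ.1
  · nlinarith [mul_nonneg (sub_nonneg.2 hτ.2) (by linarith : 0 ≤ r + a)]

theorem lin_lt_min {a r τ : ℝ} (ha : |a| < r) (hτ : τ ∈ Set.Ioo (0 : ℝ) 1) :
    τ * a < min (τ * r) (a + (1 - τ) * r) := by
  have h := abs_lt.1 ha
  apply lt_min
  · exact mul_lt_mul_of_pos_left h.2 hτ.1
  · nlinarith [mul_pos (sub_pos.2 hτ.2) (by linarith : 0 < r + a)]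

theorem dist_eq_of_coord {x y : ℝ × ℝ} {a b c : ℝ} (hy : y = (x.1 + a, x.2 + b)) (ha : |a| ≤ c) (hb : |b| ≤ c)
    (h : |a| = c ∨ |b| = c) : dist x y = c := by
  subst hy
  rw [Prod.dist_eq, Real.dist_eq, Real.dist_eq]
  simp only [sub_add_cancel_left, abs_neg]
  rcases h with h | h
  · rw [max_eq_left (hb.trans h.ge), h]
  · rw [max_eq_right (ha.trans h.ge), h]

theorem lin_geo {p : ℝ} (hp : 1 < p) (x : ℝ × ℝ) {μ : Measure (ℝ × ℝ)} (hμ : μ ∈ WSet (ℝ × ℝ) p)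
    (hT : 0 < Wdist p (Measure.dirac x) μ) :
    IsWGeo p (Wdist p (Measure.dirac x) μ) (fun t => μ.map (linE x (t / Wdist p (Measure.dirac x) μ))) ∧
    μ.map (linE x (0 / Wdist p (Measure.dirac x) μ)) = Measure.dirac x ∧
    μ.map (linE x (Wdist p (Measure.dirac x) μ / Wdist p (Measure.dirac x) μ)) = μ := by
  refine geo_criterion hp x hμ hT (linE x) (fun τ => by unfold linE; fun_prop) ?_ ?_ ?_
  · intro τ hτ z
    obtain ⟨h1, h2, h3⟩ := dist_cases x z
    refine dist_eq_of_coord rfl ?_ ?_ ?_ <;> simp only [abs_mul, abs_of_nonneg hτ.1]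
    · exact mul_le_mul_of_nonneg_left h1 hτ.1
    · exact mul_le_mul_of_nonneg_left h2 hτ.1
    · rcases h3 with h | h <;> simp [h]
  · intro σ _ τ _ z
    obtain ⟨h1, h2, -⟩ := dist_cases x z
    rw [Prod.dist_eq, Real.dist_eq, Real.dist_eq]
    simp only [linE, add_sub_add_left_eq_sub, ← sub_mul, abs_mul]
    exact max_le (mul_le_mul_of_nonneg_left h1 (abs_nonneg _)) (mul_le_mul_of_nonneg_left h2 (abs_nonneg _))
  · intro z; simp [linE]

theorem bent_geo {p : ℝ} (hp : 1 < p) (x : ℝ × ℝ) {μ : Measure (ℝ × ℝ)} (hμ : μ ∈ WSet (ℝ × ℝ) p)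
    (hT : 0 < Wdist p (Measure.dirac x) μ) :
    IsWGeo p (Wdist p (Measure.dirac x) μ) (fun t => μ.map (bentE x (t / Wdist p (Measure.dirac x) μ))) ∧
    μ.map (bentE x (0 / Wdist p (Measure.dirac x) μ)) = Measure.dirac x ∧
    μ.map (bentE x (Wdist p (Measure.dirac x) μ / Wdist p (Measure.dirac x) μ)) = μ := by
  refine geo_criterion hp x hμ hT (bentE x) (fun τ => by unfold bentE; fun_prop) ?_ ?_ ?_
  · intro τ hτ z
    obtain ⟨h1, h2, h3⟩ := dist_cases x z
    refine dist_eq_of_coord rfl (min_coord_le h1 hτ) (min_coord_le h2 hτ) ?_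
    exact h3.imp (fun h => min_coord_eq h hτ) (fun h => min_coord_eq h hτ)
  · intro σ _ τ _ z
    rw [Prod.dist_eq, Real.dist_eq, Real.dist_eq]
    simp only [bentE, add_sub_add_left_eq_sub]
    exact max_le (min_coord dist_nonneg) (min_coord dist_nonneg)
  · intro z
    obtain ⟨h1, h2, -⟩ := dist_cases x z
    simp [bentE, (abs_le.1 h1).2, (abs_le.1 h2).2]

theorem integrable_dist_aux {p : ℝ} (hp : 1 < p) (x : ℝ × ℝ) {μ : Measure (ℝ × ℝ)} (hμ : μ ∈ WSet (ℝ × ℝ) p) :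
    Integrable (fun z => dist x z) μ := by
  have hP := hμ.1
  refine ⟨by fun_prop, ?_⟩
  show ∫⁻ z, ‖dist x z‖ₑ ∂μ < ⊤
  calc ∫⁻ z, ‖dist x z‖ₑ ∂μ ≤ ∫⁻ z, 1 + edist x z ^ p ∂μ := by
        apply lintegral_mono
        intro z
        have : ‖dist x z‖ₑ = edist x z := by
          rw [Real.enorm_eq_ofReal dist_nonneg, edist_dist]
        simp only [this]
        rcases le_total (edist x z) 1 with h | h
        · exact h.trans le_self_add
        · refine le_trans ?_ le_add_self
          calc edist x z = edist x z ^ (1 : ℝ) := (ENNReal.rpow_one _).symm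
            _ ≤ _ := ENNReal.rpow_le_rpow_of_exponent_le h hp.le
    _ < ⊤ := by
        rw [lintegral_add_left (by fun_prop)]
        simp only [lintegral_const, measure_univ, mul_one]
        exact ENNReal.add_lt_top.2 ⟨by simp, moment_aux hp x hμ⟩

theorem maps_ne {p : ℝ} (hp : 1 < p) (x : ℝ × ℝ) {μ : Measure (ℝ × ℝ)} (hμ : μ ∈ WSet (ℝ × ℝ) p)
    {τ : ℝ} (hτ : τ ∈ Set.Ioo (0 : ℝ) 1) (heq : μ.map (linE x τ) = μ.map (bentE x τ)) :
    μ ({z : ℝ × ℝ | z.2 - x.2 = z.1 - x.1} ∪ {z : ℝ × ℝ | z.2 - x.2 = -(z.1 - x.1)})ᶜ = 0 := by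
  have hP := hμ.1
  have hτ' : τ ∈ Set.Icc (0 : ℝ) 1 := ⟨hτ.1.le, hτ.2.le⟩
  have hd := integrable_dist_aux hp x hμ
  have hml : Measurable (linE x τ) := by unfold linE; fun_prop
  have hmb : Measurable (bentE x τ) := by unfold bentE; fun_prop
  let f : ℝ × ℝ → ℝ := fun z => (z.1 - x.1) + (z.2 - x.2)
  have hbound : ∀ E : ℝ × ℝ → ℝ × ℝ, Measurable E → (∀ z, |(E z).1 - x.1| ≤ dist x z ∧ |(E z).2 - x.2| ≤ dist x z) →
      Integrable (fun z => f (E z)) μ := by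
    intro E hE h
    refine (hd.const_mul 2).mono' (by fun_prop) (Filter.Eventually.of_forall fun z => ?_)
    refine (abs_add_le _ _).trans ?_
    linarith [(h z).1, (h z).2]
  have hr : ∀ z, τ * dist x z ≤ dist x z := fun z => mul_le_of_le_one_left dist_nonneg hτ'.2
  have il : Integrable (fun z => f (linE x τ z)) μ := by
    refine hbound _ hml fun z => ?_
    obtain ⟨h1, h2, -⟩ := dist_cases x z
    simp only [linE, add_sub_cancel_left, abs_mul, abs_of_nonneg hτ'.1]
    exact ⟨(mul_le_mul_of_nonneg_left h1 hτ'.1).trans (hr z), (mul_le_mul_of_nonneg_left h2 hτ'.1).trans (hr z)⟩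
  have ib : Integrable (fun z => f (bentE x τ z)) μ := by
    refine hbound _ hmb fun z => ?_
    obtain ⟨h1, h2, -⟩ := dist_cases x z
    simp only [bentE, add_sub_cancel_left]
    exact ⟨(min_coord_le h1 hτ').trans (hr z), (min_coord_le h2 hτ').trans (hr z)⟩
  have e : ∫ z, f (bentE x τ z) - f (linE x τ z) ∂μ = 0 := by
    rw [integral_sub ib il, ← integral_map hmb.aemeasurable (by fun_prop),
      ← integral_map hml.aemeasurable (by fun_prop), heq, sub_self]
  have hnn : ∀ z, 0 ≤ f (bentE x τ z) - f (linE x τ z) := by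
    intro z
    obtain ⟨h1, h2, -⟩ := dist_cases x z
    simp only [f, bentE, linE, add_sub_cancel_left]
    linarith [lin_le_min h1 hτ', lin_le_min h2 hτ']
  have hae := (integral_eq_zero_iff_of_nonneg hnn (ib.sub il)).1 e
  refine measure_mono_null ?_ hae
  intro z hz h0
  have h0' : f (bentE x τ z) - f (linE x τ z) = 0 := h0
  obtain ⟨h1, h2, h3⟩ := dist_cases x z
  simp only [f, bentE, linE, add_sub_cancel_left] at h0'
  apply hz
  have q1 : |z.1 - x.1| = dist x z := by
    by_contra hne
    linarith [lin_lt_min (lt_of_le_of_ne h1 hne) hτ, lin_le_min h2 hτ']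
  have q2 : |z.2 - x.2| = dist x z := by
    by_contra hne
    linarith [lin_lt_min (lt_of_le_of_ne h2 hne) hτ, lin_le_min h1 hτ']
  exact abs_eq_abs.1 (q2.trans q1.symm)

theorem excess_aux {p l f g h : ℝ} (hp : 1 < p) (hl : l ∈ Set.Ioo (0 : ℝ) 1) (hf : 0 ≤ f) (hg : 0 ≤ g)
    (hh : 0 ≤ h) (hfg : h ≤ f + g) :
    h ^ p ≤ l * (f / l) ^ p + (1 - l) * (g / (1 - l)) ^ p ∧
    (h ^ p = l * (f / l) ^ p + (1 - l) * (g / (1 - l)) ^ p → f = l * h ∧ g = (1 - l) * h) := by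
  have hl1 : 0 < 1 - l := sub_pos.2 hl.2
  have hl0 := hl.1
  have hu : 0 ≤ f / l := div_nonneg hf hl0.le
  have hv : 0 ≤ g / (1 - l) := div_nonneg hg hl1.le
  have e : l * (f / l) + (1 - l) * (g / (1 - l)) = f + g := by
    field_simp
  have c1 : h ^ p ≤ (f + g) ^ p := Real.rpow_le_rpow hh hfg (by linarith)
  have c2 : (f + g) ^ p ≤ l * (f / l) ^ p + (1 - l) * (g / (1 - l)) ^ p := by
    have := (strictConvexOn_rpow hp).convexOn.2 hu hv hl0.le hl1.le (by ring)
    simpa only [smul_eq_mul, e] using this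
  refine ⟨c1.trans c2, fun heq => ?_⟩
  have huv : f / l = g / (1 - l) := by
    by_contra hne
    have := (strictConvexOn_rpow hp).2 hu hv hne hl0 hl1 (by ring)
    simp only [smul_eq_mul, e] at this
    linarith
  have hsum : h = f + g := by
    by_contra hne
    have := Real.rpow_lt_rpow hh (lt_of_le_of_ne hfg hne) (by linarith : 0 < p)
    linarith
  rw [div_eq_div_iff hl0.ne' hl1.ne'] at huv
  constructor
  · rw [hsum]; linarith
  · rw [hsum]; linarith

/-- excess function -/
noncomputable def excF (p l : ℝ) (x : ℝ × ℝ) (q : (ℝ × ℝ) × (ℝ × ℝ)) : ℝ :=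
  l * (dist x q.1 / l) ^ p + (1 - l) * (dist q.1 q.2 / (1 - l)) ^ p - dist x q.2 ^ p

theorem excF_cont {p l : ℝ} (hp : 1 < p) (x : ℝ × ℝ) : Continuous (excF p l x) := by
  have : 0 ≤ p := by linarith
  unfold excF
  have h : ∀ f : (ℝ × ℝ) × (ℝ × ℝ) → ℝ, Continuous f → Continuous (fun q => f q ^ p) := fun f hf =>
    hf.rpow_const fun _ => Or.inr this
  exact ((continuous_const.mul (h _ (by fun_prop))).add (continuous_const.mul (h _ (by fun_prop)))).sub
    (h _ (by fun_prop))

theorem coord_aux {a c l : ℝ} (h1 : |c| ≤ l * |a|) (h2 : |a - c| ≤ (1 - l) * |a|) : c = l * a := by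
  have k1 := abs_le.1 h1
  have k2 := abs_le.1 h2
  rcases abs_choice a with h | h <;> rw [h] at k1 k2
  · linarith [k1.1, k1.2, k2.1, k2.2]
  · linarith [k1.1, k1.2, k2.1, k2.2]

theorem excF_pos {p l : ℝ} (hp : 1 < p) (hl : l ∈ Set.Ioo (0 : ℝ) 1) (x : ℝ × ℝ) (q : (ℝ × ℝ) × (ℝ × ℝ))
    (hD : q.2 ∈ ({z : ℝ × ℝ | z.2 - x.2 = z.1 - x.1} ∪ {z : ℝ × ℝ | z.2 - x.2 = -(z.1 - x.1)}))
    (hne : q.1 ≠ linE x l q.2) : 0 < excF p l x q := by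
  obtain ⟨y, z⟩ := q
  have key := excess_aux hp hl (dist_nonneg : 0 ≤ dist x y) (dist_nonneg : 0 ≤ dist y z)
    (dist_nonneg : 0 ≤ dist x z) (dist_triangle _ _ _)
  rcases key.1.lt_or_eq with h | h
  · simpa [excF] using h
  · exfalso
    obtain ⟨hf, hg⟩ := key.2 h
    have hz : |z.2 - x.2| = |z.1 - x.1| := abs_eq_abs.2 hD
    have hxz : dist x z = |z.1 - x.1| := by
      obtain ⟨-, -, h3⟩ := dist_cases x z
      rcases h3 with h | h
      · exact h.symm
      · rw [← h, hz]
    obtain ⟨a1, a2, -⟩ := dist_cases x y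
    obtain ⟨b1, b2, -⟩ := dist_cases y z
    rw [hf] at a1 a2
    rw [hg] at b1 b2
    have r1 : y.1 - x.1 = l * (z.1 - x.1) := by
      apply coord_aux
      · rwa [hxz] at a1
      · rw [hxz] at b1
        convert b1 using 2
        ring
    have r2 : y.2 - x.2 = l * (z.2 - x.2) := by
      apply coord_aux
      · rwa [hxz, ← hz] at a2
      · rw [hxz, ← hz] at b2
        convert b2 using 2
        ring
    apply hne
    apply Prod.ext
    · simp only [linE]; linarith
    · simp only [linE]; linarith

theorem exists_small {p l : ℝ} (hp : 1 < p) (hl : l ∈ Set.Ioo (0 : ℝ) 1) (x : ℝ × ℝ)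
    {μ ν : Measure (ℝ × ℝ)} (hμ : μ ∈ WSet (ℝ × ℝ) p) (hν : ν ∈ WSet (ℝ × ℝ) p) {T : ℝ} (hT : 0 < T)
    (h1 : Wdist p (Measure.dirac x) μ = T) (h2 : Wdist p (Measure.dirac x) ν = l * T)
    (h3 : Wdist p ν μ = (1 - l) * T) {ε : ℝ} (hε : 0 < ε) :
    ∃ π : Measure ((ℝ × ℝ) × (ℝ × ℝ)), π.map Prod.fst = ν ∧ π.map Prod.snd = μ ∧
      ∫⁻ q, ENNReal.ofReal (excF p l x q) ∂π ≤ ENNReal.ofReal ε := by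
  have hp0 : 0 < p := by linarith
  have hl0 := hl.1
  have hl1 : 0 < 1 - l := sub_pos.2 hl.2
  have hb : 0 < (1 - l) * (1 - l)⁻¹ ^ p := by positivity
  obtain ⟨e', he'⟩ : ∃ e', e' = ε / ((1 - l) * (1 - l)⁻¹ ^ p) := ⟨_, rfl⟩
  have he'0 : 0 < e' := by rw [he']; positivity
  have hpos : 0 < (1 - l) * T := by positivity
  have hlt : (1 - l) * T < (((1 - l) * T) ^ p + e') ^ (1 / p) := by
    have : (1 - l) * T = (((1 - l) * T) ^ p) ^ (1 / p) := by
      rw [← Real.rpow_mul hpos.le, mul_one_div_cancel hp0.ne', Real.rpow_one]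
    conv_lhs => rw [this]
    exact Real.rpow_lt_rpow (by positivity) (by linarith) (by positivity)
  have hinf : (⨅ π ∈ {π : Measure ((ℝ × ℝ) × (ℝ × ℝ)) | π.map Prod.fst = ν ∧ π.map Prod.snd = μ},
      (∫⁻ q, edist q.1 q.2 ^ p ∂π) ^ (1 / p)) < ENNReal.ofReal ((((1 - l) * T) ^ p + e') ^ (1 / p)) := by
    unfold Wdist at h3
    refine lt_of_eq_of_lt ?_ ((ENNReal.ofReal_lt_ofReal_iff (hpos.trans hlt)).2 hlt)
    rw [← h3, ENNReal.ofReal_toReal]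
    intro htop
    rw [htop, ENNReal.toReal_top] at h3
    exact hpos.ne h3
  simp only [iInf_lt_iff] at hinf
  obtain ⟨π, ⟨hπ1, hπ2⟩, hπ⟩ := hinf
  refine ⟨π, hπ1, hπ2, ?_⟩
  rw [← ENNReal.ofReal_rpow_of_nonneg (by positivity) (by positivity),
    ENNReal.rpow_lt_rpow_iff (by positivity)] at hπ
  have i1 : ∫⁻ q, edist x q.1 ^ p ∂π = ENNReal.ofReal ((l * T) ^ p) := by
    rw [← ENNReal.ofReal_rpow_of_nonneg (by positivity) hp0.le, ← h2, Wdist_dirac_pow' hp x hν, ← hπ1,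
      lintegral_map (by fun_prop) measurable_fst]
  have i2 : ∫⁻ q, edist x q.2 ^ p ∂π = ENNReal.ofReal (T ^ p) := by
    rw [← ENNReal.ofReal_rpow_of_nonneg (by positivity) hp0.le, ← h1, Wdist_dirac_pow' hp x hμ, ← hπ2,
      lintegral_map (by fun_prop) measurable_snd]
  have hpt : ∀ q, ENNReal.ofReal (excF p l x q) + edist x q.2 ^ p =
      ENNReal.ofReal (l * l⁻¹ ^ p) * edist x q.1 ^ p +
      ENNReal.ofReal ((1 - l) * (1 - l)⁻¹ ^ p) * edist q.1 q.2 ^ p := by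
    intro q
    have k := (excess_aux hp hl (dist_nonneg : 0 ≤ dist x q.1) (dist_nonneg : 0 ≤ dist q.1 q.2)
      (dist_nonneg : 0 ≤ dist x q.2) (dist_triangle _ _ _)).1
    simp only [edist_dist, ENNReal.ofReal_rpow_of_nonneg dist_nonneg hp0.le]
    rw [← ENNReal.ofReal_mul (by positivity), ← ENNReal.ofReal_mul (by positivity),
      ← ENNReal.ofReal_add (by unfold excF; linarith) (by positivity),
      ← ENNReal.ofReal_add (by positivity) (by positivity)]
    congr 1
    simp only [excF, div_eq_mul_inv]
    rw [Real.mul_rpow dist_nonneg (by positivity), Real.mul_rpow dist_nonneg (by positivity)]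
    ring
  have hFm : Measurable fun q => ENNReal.ofReal (excF p l x q) := (excF_cont hp x).measurable.ennreal_ofReal
  have hsum := lintegral_congr (μ := π) hpt
  rw [lintegral_add_left hFm, lintegral_add_left (by fun_prop), lintegral_const_mul _ (by fun_prop),
    lintegral_const_mul _ (by fun_prop), i1, i2] at hsum
  have hle : ∫⁻ q, ENNReal.ofReal (excF p l x q) ∂π + ENNReal.ofReal (T ^ p) ≤
      ENNReal.ofReal ε + ENNReal.ofReal (T ^ p) := by
    rw [hsum]
    calc _ ≤ ENNReal.ofReal (l * l⁻¹ ^ p) * ENNReal.ofReal ((l * T) ^ p) +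
        ENNReal.ofReal ((1 - l) * (1 - l)⁻¹ ^ p) * ENNReal.ofReal (((1 - l) * T) ^ p + e') := by
          gcongr
      _ = _ := by
          rw [← ENNReal.ofReal_mul (by positivity), ← ENNReal.ofReal_mul (by positivity),
            ← ENNReal.ofReal_add (by positivity) (by positivity),
            ← ENNReal.ofReal_add (by positivity) (by positivity)]
          congr 1
          have u : ∀ c : ℝ, 0 < c → c⁻¹ ^ p * (c * T) ^ p = T ^ p := by
            intro c hc
            rw [← Real.mul_rpow (by positivity) (by positivity), inv_mul_cancel_left₀ hc.ne']
          have w : (1 - l) * (1 - l)⁻¹ ^ p * e' = ε := by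
            rw [he']; field_simp
          rw [mul_add, w, mul_assoc, u l hl0, mul_assoc, u _ hl1]
          ring
  exact (ENNReal.add_le_add_iff_right ENNReal.ofReal_ne_top).1 hle

theorem geo_unique_aux {p l : ℝ} (hp : 1 < p) (hl : l ∈ Set.Ioo (0 : ℝ) 1) (x : ℝ × ℝ)
    {μ ν : Measure (ℝ × ℝ)} (hμ : μ ∈ WSet (ℝ × ℝ) p) (hν : ν ∈ WSet (ℝ × ℝ) p) {T : ℝ} (hT : 0 < T)
    (h1 : Wdist p (Measure.dirac x) μ = T) (h2 : Wdist p (Measure.dirac x) ν = l * T)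
    (h3 : Wdist p ν μ = (1 - l) * T) (D : Set (ℝ × ℝ)) (hDc : IsClosed D)
    (hD : D = ({z : ℝ × ℝ | z.2 - x.2 = z.1 - x.1} ∪ {z : ℝ × ℝ | z.2 - x.2 = -(z.1 - x.1)}))
    (hD0 : μ Dᶜ = 0) : ν = μ.map (linE x l) := by
  have hPμ := hμ.1
  have hPν := hν.1
  have hml : Measurable (linE x l) := by unfold linE; fun_prop
  have hPm : IsProbabilityMeasure (μ.map (linE x l)) := Measure.isProbabilityMeasure_map hml.aemeasurable
  have step : ∀ A K : Set (ℝ × ℝ), IsCompact A → IsCompact K → (∀ y ∈ A, ∀ z ∈ K, 0 < excF p l x (y, z)) →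
      ν A + μ K ≤ 1 := by
    intro A K hA hK hpos
    obtain ⟨c, hc, hcF⟩ : ∃ c : ℝ, 0 < c ∧ ∀ q ∈ A ×ˢ K, c ≤ excF p l x q := by
      rcases (A ×ˢ K).eq_empty_or_nonempty with he | hne
      · exact ⟨1, one_pos, by simp [he]⟩
      · obtain ⟨q, hq, hmin⟩ := (hA.prod hK).exists_isMinOn hne (excF_cont (l := l) hp x).continuousOn
        exact ⟨excF p l x q, hpos _ hq.1 _ hq.2, fun r hr => hmin hr⟩
    apply ENNReal.le_of_forall_pos_le_add
    intro δ hδ _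
    obtain ⟨π, hπ1, hπ2, hπ⟩ := exists_small hp hl x hμ hν hT h1 h2 h3 (mul_pos (NNReal.coe_pos.2 hδ) hc)
    have hPπ : IsProbabilityMeasure π := by
      constructor
      rw [← Set.preimage_univ (f := Prod.fst), ← Measure.map_apply measurable_fst MeasurableSet.univ, hπ1,
        measure_univ]
    rw [← hπ1, ← hπ2, Measure.map_apply measurable_fst hA.measurableSet,
      Measure.map_apply measurable_snd hK.measurableSet,
      ← measure_union_add_inter _ (measurable_snd hK.measurableSet)]
    gcongr
    · exact prob_le_one
    · have hFm : Measurable fun q => ENNReal.ofReal (excF p l x q) :=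
        (excF_cont hp x).measurable.ennreal_ofReal
      calc _ ≤ π {q | ENNReal.ofReal c ≤ ENNReal.ofReal (excF p l x q)} :=
            measure_mono fun q hq => ENNReal.ofReal_le_ofReal (hcF q hq)
        _ ≤ (∫⁻ q, ENNReal.ofReal (excF p l x q) ∂π) / ENNReal.ofReal c :=
            meas_ge_le_lintegral_div hFm.aemeasurable (by simpa using hc) ENNReal.ofReal_ne_top
        _ ≤ ENNReal.ofReal (δ * c) / ENNReal.ofReal c := by gcongr
        _ = δ := by
            rw [← ENNReal.ofReal_div_of_pos hc, mul_div_cancel_right₀ _ hc.ne', ENNReal.ofReal_coe_nnreal]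
  have hcomp : ∀ A : Set (ℝ × ℝ), IsCompact A → ν A ≤ μ.map (linE x l) A := by
    intro A hA
    have hmeas : MeasurableSet (linE x l ⁻¹' Aᶜ ∩ D) := (hml hA.measurableSet.compl).inter hDc.measurableSet
    have hle : μ (linE x l ⁻¹' Aᶜ ∩ D) ≤ 1 - ν A := by
      rw [hmeas.measure_eq_iSup_isCompact]
      refine iSup_le fun K => iSup_le fun hKs => iSup_le fun hK => ?_
      apply ENNReal.le_sub_of_add_le_left (measure_ne_top _ _)
      refine step A K hA hK fun y hy z hz => ?_
      refine excF_pos hp hl x (y, z) (hD ▸ (hKs hz).2) ?_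
      intro hyz
      have hyz' : y = linE x l z := hyz
      exact (hKs hz).1 (hyz' ▸ hy)
    have heq : μ (linE x l ⁻¹' Aᶜ ∩ D) = 1 - μ.map (linE x l) A := by
      rw [measure_inter_conull hD0, ← Measure.map_apply hml hA.measurableSet.compl,
        prob_compl_eq_one_sub hA.measurableSet]
    rw [heq] at hle
    exact (ENNReal.sub_le_sub_iff_left prob_le_one ENNReal.one_ne_top).1 hle
  apply Measure.eq_of_le_of_isProbabilityMeasure
  rw [Measure.le_iff]
  intro s hs
  rw [hs.measure_eq_iSup_isCompact]
  refine iSup_le fun K => iSup_le fun hKs => iSup_le fun hK => ?_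
  exact (hcomp K hK).trans (measure_mono hKs)

/-- For `p > 1` and `x ∈ ℝ²`, there is a unique unit-speed geodesic from `δ_x` to `μ`
in `𝒲_p(ℝ², d_m)` if and only if `μ` is supported on the union `D_x` of the two
diagonal lines through `x`. -/
theorem unique_geodesic_from_dirac_iff_diag_support (p : ℝ) (hp : 1 < p) (x : ℝ × ℝ)
    (μ : Measure (ℝ × ℝ)) (hμ : μ ∈ WSet (ℝ × ℝ) p) :
    ((∃ γ : ℝ → Measure (ℝ × ℝ), IsWGeo p (Wdist p (Measure.dirac x) μ) γ ∧
        γ 0 = Measure.dirac x ∧ γ (Wdist p (Measure.dirac x) μ) = μ) ∧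
      (∀ γ₁ γ₂ : ℝ → Measure (ℝ × ℝ),
        IsWGeo p (Wdist p (Measure.dirac x) μ) γ₁ →
        γ₁ 0 = Measure.dirac x → γ₁ (Wdist p (Measure.dirac x) μ) = μ →
        IsWGeo p (Wdist p (Measure.dirac x) μ) γ₂ →
        γ₂ 0 = Measure.dirac x → γ₂ (Wdist p (Measure.dirac x) μ) = μ →
        ∀ t ∈ Set.Icc (0 : ℝ) (Wdist p (Measure.dirac x) μ), γ₁ t = γ₂ t)) ↔
    msupport μ ⊆
      {z : ℝ × ℝ | z.2 - x.2 = z.1 - x.1} ∪ {z : ℝ × ℝ | z.2 - x.2 = -(z.1 - x.1)} := by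
  have hP := hμ.1
  have hDc : IsClosed ({z : ℝ × ℝ | z.2 - x.2 = z.1 - x.1} ∪ {z : ℝ × ℝ | z.2 - x.2 = -(z.1 - x.1)}) :=
    (isClosed_eq (by fun_prop) (by fun_prop)).union (isClosed_eq (by fun_prop) (by fun_prop))
  rw [msupport_subset_iff_aux μ _ hDc]
  have hT0 : 0 ≤ Wdist p (Measure.dirac x) μ := ENNReal.toReal_nonneg
  rcases hT0.eq_or_lt with hT | hT
  · -- degenerate case
    have hae : ∀ᵐ z ∂μ, z = x := by
      have h := Wdist_dirac_pow' hp x hμ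
      rw [← hT, ENNReal.ofReal_zero, ENNReal.zero_rpow_of_pos (by linarith)] at h
      have := (lintegral_eq_zero_iff (by fun_prop)).1 h.symm
      filter_upwards [this] with z hz
      have hz' : edist x z ^ p = 0 := hz
      rw [ENNReal.rpow_eq_zero_iff_of_pos (by linarith), edist_eq_zero] at hz'
      exact hz'.symm
    have hdir : μ = Measure.dirac x := by
      have h1 : μ.map id = μ.map (fun _ => x) := Measure.map_congr hae
      rwa [Measure.map_id, Measure.map_const, measure_univ, one_smul] at h1
    refine iff_of_true ⟨⟨fun _ => μ, ⟨fun _ _ => hμ, ?_⟩, hdir, rfl⟩, ?_⟩ ?_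
    · intro s hs t ht
      rw [← hT, Set.Icc_self, Set.mem_singleton_iff] at hs ht
      rw [hs, ht, sub_self, abs_zero]
      conv_lhs => rw [hdir]
      rw [hdir] at hT
      exact hT.symm
    · intro γ₁ γ₂ _ h1 _ _ h2 _ t ht
      rw [← hT, Set.Icc_self, Set.mem_singleton_iff] at ht
      rw [ht, h1, h2]
    · rw [← mem_ae_iff]
      filter_upwards [hae] with z hz
      subst hz
      left
      simp
  · constructor
    · rintro ⟨-, huniq⟩
      obtain ⟨l1, l2, l3⟩ := lin_geo hp x hμ hT
      obtain ⟨b1, b2, b3⟩ := bent_geo hp x hμ hT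
      have h := huniq _ _ l1 l2 l3 b1 b2 b3 (Wdist p (Measure.dirac x) μ / 2) ⟨by linarith, by linarith⟩
      have hhalf : Wdist p (Measure.dirac x) μ / 2 / Wdist p (Measure.dirac x) μ = 1 / 2 := by
        field_simp
      simp only [hhalf] at h
      exact maps_ne hp x hμ (by norm_num) h
    · intro hD
      refine ⟨⟨_, lin_geo hp x hμ hT⟩, ?_⟩
      have key : ∀ γ : ℝ → Measure (ℝ × ℝ), IsWGeo p (Wdist p (Measure.dirac x) μ) γ →
          γ 0 = Measure.dirac x → γ (Wdist p (Measure.dirac x) μ) = μ →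
          ∀ t ∈ Set.Ioo (0 : ℝ) (Wdist p (Measure.dirac x) μ),
            γ t = μ.map (linE x (t / Wdist p (Measure.dirac x) μ)) := by
        intro γ hγ g0 gT t ht
        have htI : t ∈ Set.Icc (0 : ℝ) (Wdist p (Measure.dirac x) μ) := ⟨ht.1.le, ht.2.le⟩
        have e1 := hγ.2 0 ⟨le_rfl, hT.le⟩ t htI
        have e2 := hγ.2 t htI _ ⟨hT.le, le_rfl⟩
        rw [g0, zero_sub, abs_neg, abs_of_pos ht.1] at e1
        rw [gT, abs_of_neg (by linarith [ht.2])] at e2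
        refine geo_unique_aux hp ⟨div_pos ht.1 hT, (div_lt_one hT).2 ht.2⟩ x hμ (hγ.1 t htI) hT rfl ?_ ?_ _ hDc
          rfl hD
        · rw [e1]; field_simp
        · rw [e2]; field_simp; ring
      intro γ₁ γ₂ hγ₁ a1 b1 hγ₂ a2 b2 t ht
      rcases ht.1.eq_or_lt with h0 | h0
      · rw [← h0, a1, a2]
      rcases ht.2.eq_or_lt with h1 | h1
      · rw [h1, b1, b2]
      rw [key γ₁ hγ₁ a1 b1 t ⟨h0, h1⟩, key γ₂ hγ₂ a2 b2 t ⟨h0, h1⟩]
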